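/- Let G and H be graphs of the same order n ≥ 1. Then H ⪯ G if and only if H* ⪯ G*, and H ≺ G if and only if H* ≺ G*. -/

import Mathlib

/-! The substitution `y = x / (1 + x)` carries `(-1, 0]` increasingly onto `(-∞, 0]`. An
independent set of `G*` is an independent set `s` of `G` together with any set of pendant vertices
over the complement of `s`, so `I(G*, x) = (1 + x) ^ n * I(G, x / (1 + x))` for `x ≠ -1`
(`corona_eval`). Hence `ξ(G*) = ξ(G) / (1 - ξ(G))`, the interval `[ξ(G*), 0]` corresponds to
`[ξ(G), 0]` under the substitution, and the positive factor `(1 + x) ^ n` is the same for `G` and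
`H`; this gives both equivalences, strictness being an identity of polynomials on an infinite set.

This needs `I(G, ·)` to have a real root at all, since otherwise `xi G` is a junk value. Let `m` be
the largest `t ≤ 0` at which the independence polynomial of some induced subgraph of `G` vanishes
(`-1` is such a `t`, from a single vertex). At `m` all these polynomials are nonnegative, so the
deletion recurrence `I(S ∪ {v}) = I(S) + m * I(S \ N(v))` propagates vanishing from `S` to
`S ∪ {v}`, and finally to the whole graph (`exists_root`). -/

open Polynomial SimpleGraph

/-- A finset of vertices is independent: pairwise nonadjacent. -/
def IsIndepFinset {V : Type*} (G : SimpleGraph V) (s : Finset V) : Prop :=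
  ∀ u ∈ s, ∀ v ∈ s, ¬ G.Adj u v

open Classical in
/-- The independence polynomial of a finite graph, with real coefficients. -/
noncomputable def indepPoly {V : Type*} [Fintype V] (G : SimpleGraph V) : Polynomial ℝ :=
  ∑ s : Finset V, if IsIndepFinset G s then (X : Polynomial ℝ) ^ s.card else 0

/-- `xi G` : the largest real root of the independence polynomial of `G`. -/
noncomputable def xi {V : Type*} [Fintype V] (G : SimpleGraph V) : ℝ :=
  sSup {x : ℝ | (indepPoly G).eval x = 0}

/-- `Pre H G` (`H ⪯ G`) : `I(H,x) ≥ I(G,x)` for all `x ∈ [ξ(G), 0]`. -/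
def Pre {V W : Type*} [Fintype V] [Fintype W] (H : SimpleGraph W) (G : SimpleGraph V) : Prop :=
  ∀ x ∈ Set.Icc (xi G) 0, (indepPoly G).eval x ≤ (indepPoly H).eval x

/-- `SPre H G` (`H ≺ G`). -/
def SPre {V W : Type*} [Fintype V] [Fintype W] (H : SimpleGraph W) (G : SimpleGraph V) : Prop :=
  Pre H G ∧ indepPoly H ≠ indepPoly G

open Classical in
/-- A graph is well-covered if all maximal independent sets have the same size. -/
def WellCovered {V : Type*} (G : SimpleGraph V) : Prop :=
  ∀ s t : Finset V,
    IsIndepFinset G s → (∀ v ∉ s, ¬ IsIndepFinset G (insert v s)) →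
    IsIndepFinset G t → (∀ v ∉ t, ¬ IsIndepFinset G (insert v t)) →
    s.card = t.card

/-- A connected unicyclic graph: connected with as many edges as vertices. -/
def Unicyclic {V : Type*} [Fintype V] (G : SimpleGraph V) : Prop :=
  G.Connected ∧ G.edgeSet.ncard = Fintype.card V

/-- The graph star (corona with `K₁`) of `G`: each vertex `inl v` gets a pendant
vertex `inr v`. -/
def corona {V : Type*} (G : SimpleGraph V) : SimpleGraph (V ⊕ V) :=
  SimpleGraph.fromRel (fun a b =>
    match a, b with
    | Sum.inl u, Sum.inl v => G.Adj u v
    | Sum.inl u, Sum.inr v => u = v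
    | _, _ => False)

/-- `Ugraph n` (`U_n`, `n ≥ 3`): a triangle `0,1,2` with `n - 3` pendant vertices attached
to vertex `0`. -/
def Ugraph (n : ℕ) : SimpleGraph (Fin n) :=
  SimpleGraph.fromRel (fun i j => i.val = 0 ∨ (i.val = 1 ∧ j.val = 2))

/-- `Dgraph n` (`D_n`, `n ≥ 4`): a path `0,1,...,n-1` plus the chord `{0,2}`, i.e. a
triangle with a path on `n - 3` vertices attached. -/
def Dgraph (n : ℕ) : SimpleGraph (Fin n) :=
  SimpleGraph.fromRel (fun i j => j.val = i.val + 1 ∨ (i.val = 0 ∧ j.val = 2))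

/-- `starGraph n` (`S_n = K_{1,n-1}`): vertex `0` adjacent to all other vertices. -/
def starGraph (n : ℕ) : SimpleGraph (Fin n) :=
  SimpleGraph.fromRel (fun i _ => i.val = 0)

/-- `Mgraph n` (`M_n`, odd `n ≥ 5`): a triangle `0,1,2` with `(n-3)/2` paths of length two
attached at vertex `0`; the middle vertices are the odd indices `3,5,...,n-2` and the leaf
attached to middle vertex `i` is `i + 1`. -/
def Mgraph (n : ℕ) : SimpleGraph (Fin n) :=
  SimpleGraph.fromRel (fun i j =>
    (i.val = 0 ∧ (j.val ≤ 2 ∨ j.val % 2 = 1)) ∨ (i.val = 1 ∧ j.val = 2) ∨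
    (i.val % 2 = 1 ∧ 3 ≤ i.val ∧ j.val = i.val + 1))

/-- `SPgraph g k ℓ` (`G(g,k,ℓ)`, for `g ∈ {3,5}` and `k + ℓ ≥ 1`): a cycle on the vertices
`0,...,g-1`, a copy of `P_k*` on the vertices `g,...,g+2k-1` (path vertices at even offsets,
each followed by its pendant vertex) joined to the cycle vertex `0` by an edge to the
path end `g`, and a copy of `P_ℓ*` on the vertices `g+2k,...,g+2k+2ℓ-1` joined to the cycle
vertex `2` by an edge to the path end `g+2k`. -/
def SPgraph (g k ℓ : ℕ) : SimpleGraph (Fin (g + 2*k + 2*ℓ)) :=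
  SimpleGraph.fromRel (fun i j =>
    (i.val < g ∧ j.val < g ∧ (j.val = i.val + 1 ∨ (i.val = 0 ∧ j.val = g - 1))) ∨
    (i.val = 0 ∧ 0 < k ∧ j.val = g) ∨
    (g ≤ i.val ∧ i.val < g + 2*k ∧ (i.val - g) % 2 = 0 ∧
      (j.val = i.val + 1 ∨ (j.val = i.val + 2 ∧ j.val < g + 2*k))) ∨
    (i.val = 2 ∧ 0 < ℓ ∧ j.val = g + 2*k) ∨
    (g + 2*k ≤ i.val ∧ (i.val - (g + 2*k)) % 2 = 0 ∧
      (j.val = i.val + 1 ∨ j.val = i.val + 2)))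

/-- `Gtree n` (`G_{2n}`, `n ≥ 5`): the tree on `2n` vertices with path `v_1 … v_n` at
indices `0,…,n-1`, `z_1` at index `n`, `y_1, y_2` at `n+1, n+2`, `x_1, x_2` at `n+3, n+4`
(with `v_3 z_1`, `v_3 y_1`, `y_1 y_2`, `v_5 x_1`, `x_1 x_2` edges), and pendant vertices
`w_j` at index `n + j - 1` attached to `v_j` for `6 ≤ j ≤ n`. -/
def Gtree (n : ℕ) : SimpleGraph (Fin (2*n)) :=
  SimpleGraph.fromRel (fun a b =>
    (a.val + 1 = b.val ∧ b.val < n) ∨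
    (a.val = 2 ∧ (b.val = n ∨ b.val = n + 1)) ∨
    (a.val = n + 1 ∧ b.val = n + 2) ∨
    (a.val = 4 ∧ b.val = n + 3) ∨
    (a.val = n + 3 ∧ b.val = n + 4) ∨
    (5 ≤ a.val ∧ a.val < n ∧ b.val = n + a.val))

/-! ### Existence of a real root -/

open Classical in
/-- The value at `t` of the independence polynomial of the subgraph of `G` induced on `S`. -/
noncomputable def subVal {V : Type*} (G : SimpleGraph V) (S : Finset V) (t : ℝ) : ℝ :=
  ∑ T ∈ S.powerset, if IsIndepFinset G T then t ^ T.card else 0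

open Classical in
theorem eval_indepPoly {V : Type*} [Fintype V] (G : SimpleGraph V) (t : ℝ) :
    (indepPoly G).eval t = ∑ s : Finset V, if IsIndepFinset G s then t ^ s.card else 0 := by
  unfold indepPoly
  rw [Polynomial.eval_finsetSum]
  refine Finset.sum_congr rfl fun s _ => ?_
  split_ifs <;> simp

theorem subVal_univ {V : Type*} [Fintype V] (G : SimpleGraph V) (t : ℝ) :
    subVal G Finset.univ t = (indepPoly G).eval t := by
  rw [eval_indepPoly, subVal, Finset.powerset_univ]

theorem isIndepFinset_empty {V : Type*} (G : SimpleGraph V) : IsIndepFinset G ∅ := by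
  simp [IsIndepFinset]

theorem subVal_zero {V : Type*} (G : SimpleGraph V) (S : Finset V) : subVal G S 0 = 1 := by
  classical
  unfold subVal
  rw [Finset.sum_eq_single ∅]
  · simp [isIndepFinset_empty]
  · intro b _ hb
    simp [hb]
  · simp

theorem continuous_subVal {V : Type*} (G : SimpleGraph V) (S : Finset V) :
    Continuous (subVal G S) := by
  classical
  unfold subVal
  refine continuous_finsetSum _ fun T _ => ?_
  split_ifs <;> fun_prop

theorem isIndepFinset_insert {V : Type*} [DecidableEq V] (G : SimpleGraph V) (v : V)
    (T : Finset V) :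
    IsIndepFinset G (insert v T) ↔ IsIndepFinset G T ∧ ∀ u ∈ T, ¬ G.Adj v u := by
  simp only [IsIndepFinset, Finset.mem_insert, forall_eq_or_imp, G.irrefl, not_false_eq_true,
    true_and]
  constructor
  · rintro ⟨h1, h2⟩
    exact ⟨fun u hu => (h2 u hu).2, h1⟩
  · rintro ⟨h1, h2⟩
    exact ⟨h2, fun u hu => ⟨fun h => h2 u hu h.symm, h1 u hu⟩⟩

open Classical in
/-- Deletion recurrence: split the independent sets according to whether they contain `v`. -/
theorem subVal_insert {V : Type*} (G : SimpleGraph V) (S : Finset V) (v : V) (hv : v ∉ S)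
    (t : ℝ) :
    subVal G (insert v S) t = subVal G S t + t * subVal G (S.filter fun u => ¬ G.Adj v u) t := by
  unfold subVal
  rw [Finset.sum_powerset_insert hv, Finset.mul_sum]
  congr 1
  symm
  apply Finset.sum_subset_zero_on_sdiff
  · exact Finset.powerset_mono.2 (Finset.filter_subset _ _)
  · intro T hT
    simp only [Finset.mem_sdiff, Finset.mem_powerset] at hT
    rw [if_neg]
    rw [isIndepFinset_insert]
    rintro ⟨_, h⟩
    exact hT.2 fun u hu => Finset.mem_filter.2 ⟨hT.1 hu, h u hu⟩
  · intro T hT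
    rw [Finset.mem_powerset] at hT
    have hvT : v ∉ T := fun h => hv (Finset.mem_filter.1 (hT h)).1
    rw [isIndepFinset_insert, Finset.card_insert_of_notMem hvT]
    have : ∀ u ∈ T, ¬ G.Adj v u := fun u hu => (Finset.mem_filter.1 (hT hu)).2
    rw [and_iff_left this, mul_ite, mul_zero, pow_succ']

theorem exists_root {V : Type*} [Fintype V] [Nonempty V] (G : SimpleGraph V) :
    ∃ t, (indepPoly G).eval t = 0 := by
  classical
  let Z : Set ℝ := {t | t ≤ 0 ∧ ∃ S, subVal G S t = 0}
  have hZ : Z = Set.Iic 0 ∩ ⋃ S : Finset V, subVal G S ⁻¹' {0} := by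
    ext t
    simp [Z]
  have hclosed : IsClosed Z := by
    rw [hZ]
    exact isClosed_Iic.inter
      (isClosed_iUnion_of_finite fun S => isClosed_singleton.preimage (continuous_subVal G S))
  have hne : Z.Nonempty := by
    obtain ⟨v⟩ := ‹Nonempty V›
    refine ⟨-1, by norm_num, {v}, ?_⟩
    have := subVal_insert G ∅ v (by simp) (-1)
    have he : ∀ t, subVal G ∅ t = 1 := by
      intro t
      simp [subVal, isIndepFinset_empty]
    simpa [he] using this
  have hbdd : BddAbove Z := ⟨0, fun t ht => ht.1⟩
  obtain ⟨hm0, S, hS⟩ := hclosed.csSup_mem hne hbdd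
  set m := sSup Z
  have hmlt : m < 0 := by
    refine lt_of_le_of_ne hm0 fun h => ?_
    rw [h, subVal_zero] at hS
    exact one_ne_zero hS
  -- A negative value at `m` would force a zero strictly between `m` and `0`.
  have hnonneg : ∀ T, 0 ≤ subVal G T m := by
    intro T
    by_contra! h
    obtain ⟨t, ht, ht0⟩ := intermediate_value_Ioo hm0 (continuous_subVal G T).continuousOn
      (show (0 : ℝ) ∈ Set.Ioo _ _ from ⟨h, by rw [subVal_zero]; norm_num⟩)
    exact absurd (le_csSup hbdd (show t ∈ Z from ⟨ht.2.le, T, ht0⟩)) (not_le.2 ht.1)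
  have key : ∀ R : Finset V, subVal G (R ∪ S) m = 0 := by
    intro R
    induction R using Finset.induction_on with
    | empty => simpa using hS
    | insert v R _ ih =>
      rw [Finset.insert_union]
      by_cases hv : v ∈ R ∪ S
      · rwa [Finset.insert_eq_of_mem hv]
      · have h := subVal_insert G (R ∪ S) v hv m
        have h1 := hnonneg (insert v (R ∪ S))
        have h2 := mul_nonpos_of_nonpos_of_nonneg hm0
          (hnonneg ((R ∪ S).filter fun u => ¬ G.Adj v u))
        linarith
  refine ⟨m, ?_⟩
  rw [← subVal_univ]
  have h := key Finset.univ
  rwa [Finset.union_eq_left.2 (Finset.subset_univ S)] at h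

theorem eval_pos_of_nonneg {V : Type*} [Fintype V] (G : SimpleGraph V) {t : ℝ} (ht : 0 ≤ t) :
    0 < (indepPoly G).eval t := by
  classical
  rw [eval_indepPoly]
  refine Finset.sum_pos' (fun s _ => ?_) ⟨∅, Finset.mem_univ _, ?_⟩
  · split_ifs <;> positivity
  · simp [isIndepFinset_empty]

theorem xi_isGreatest {V : Type*} [Fintype V] [Nonempty V] (G : SimpleGraph V) :
    IsGreatest {x : ℝ | (indepPoly G).eval x = 0} (xi G) := by
  have hp : indepPoly G ≠ 0 := fun h => by
    simpa [h] using eval_pos_of_nonneg G le_rfl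
  have hfin : {x : ℝ | (indepPoly G).eval x = 0}.Finite :=
    Polynomial.finite_setOfPred_isRoot hp
  have hne : {x : ℝ | (indepPoly G).eval x = 0}.Nonempty := exists_root G
  exact ⟨hne.csSup_mem hfin, fun x hx => le_csSup hfin.bddAbove hx⟩

theorem xi_neg {V : Type*} [Fintype V] [Nonempty V] (G : SimpleGraph V) : xi G < 0 := by
  by_contra! h
  exact (eval_pos_of_nonneg G h).ne' (xi_isGreatest G).1

/-! ### The independence polynomial of the graph star -/

theorem isIndepFinset_corona {V : Type*} [DecidableEq V] [Fintype V] (G : SimpleGraph V)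
    (s t : Finset V) :
    IsIndepFinset (corona G) (s.disjSum t) ↔ IsIndepFinset G s ∧ t ⊆ sᶜ := by
  constructor
  · intro h
    refine ⟨fun u hu v hv huv => ?_, fun u hu => ?_⟩
    · exact h (.inl u) (by simpa) (.inl v) (by simpa) (by simp [corona, huv, huv.ne])
    · rw [Finset.mem_compl]
      intro hus
      exact h (.inl u) (by simpa) (.inr u) (by simpa) (by simp [corona])
  · rintro ⟨h1, h2⟩ (u | u) hu (v | v) hv
    · simp only [Finset.inl_mem_disjSum] at hu hv
      simp [corona, h1 u hu v hv, h1 v hv u hu]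
    · simp only [Finset.inl_mem_disjSum, Finset.inr_mem_disjSum] at hu hv
      have := Finset.mem_compl.1 (h2 hv)
      simp only [corona, SimpleGraph.fromRel_adj]
      rintro ⟨_, rfl | h⟩
      exacts [this hu, h]
    · simp only [Finset.inl_mem_disjSum, Finset.inr_mem_disjSum] at hu hv
      have := Finset.mem_compl.1 (h2 hu)
      simp only [corona, SimpleGraph.fromRel_adj]
      rintro ⟨_, h | rfl⟩
      exacts [h, this hv]
    · simp [corona]

theorem corona_eval {V : Type*} [Fintype V] (G : SimpleGraph V) {x : ℝ} (hx : 1 + x ≠ 0) :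
    (indepPoly (corona G)).eval x =
      (1 + x) ^ Fintype.card V * (indepPoly G).eval (x / (1 + x)) := by
  classical
  rw [eval_indepPoly, eval_indepPoly, ← Finset.sumEquiv.symm.toEquiv.sum_comp,
    Fintype.sum_prod_type, Finset.mul_sum]
  refine Finset.sum_congr rfl fun s _ => ?_
  have hc : ∀ t : Finset V, Finset.sumEquiv.symm.toEquiv (s, t) = s.disjSum t := fun t => rfl
  simp only [hc, isIndepFinset_corona, Finset.card_disjSum]
  by_cases hs : IsIndepFinset G s
  · have h1 : ∑ t ∈ sᶜ.powerset, x ^ t.card = (1 + x) ^ sᶜ.card := by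
      have := Finset.sum_pow_mul_eq_add_pow x 1 sᶜ
      simpa [add_comm] using this
    have h2 : Fintype.card V = s.card + sᶜ.card := (Finset.card_add_card_compl s).symm
    simp only [hs, true_and, if_true]
    rw [← Finset.sum_filter, h2, pow_add, div_pow]
    have h3 : (Finset.univ.filter fun t : Finset V => t ⊆ sᶜ) = sᶜ.powerset := by
      ext t
      simp
    simp only [h3, pow_add]
    rw [← Finset.mul_sum, h1]
    field_simp
  · simp [hs]

/-- The inverse substitution: `y / (1 - y)` is sent back to `y`. -/
theorem subst_inv {y : ℝ} (hy : y ≤ 0) :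
    0 < 1 + y / (1 - y) ∧ (y / (1 - y)) / (1 + y / (1 - y)) = y := by
  have h : 0 < 1 - y := by linarith
  have h1 : 1 + y / (1 - y) = 1 / (1 - y) := by
    field_simp
    ring
  rw [h1]
  exact ⟨by positivity, by field_simp⟩

theorem subst_le_iff {x y : ℝ} (hx : 0 < 1 + x) (hy : y ≤ 0) :
    x ≤ y / (1 - y) ↔ x / (1 + x) ≤ y := by
  have h : 0 < 1 - y := by linarith
  rw [le_div_iff₀ h, div_le_iff₀ hx]
  constructor <;> intro <;> linarith

theorem le_subst_iff {x y : ℝ} (hx : 0 < 1 + x) (hy : y ≤ 0) :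
    y / (1 - y) ≤ x ↔ y ≤ x / (1 + x) := by
  have h : 0 < 1 - y := by linarith
  rw [div_le_iff₀ h, le_div_iff₀ hx]
  constructor <;> intro <;> linarith

theorem xi_corona {V : Type*} [Fintype V] [Nonempty V] (G : SimpleGraph V) :
    xi (corona G) = xi G / (1 - xi G) := by
  have hxi := (xi_neg G).le
  obtain ⟨h1, h2⟩ := subst_inv hxi
  refine (xi_isGreatest (corona G)).unique ⟨?_, fun x hx => ?_⟩
  · have h0 : (indepPoly G).eval (xi G) = 0 := (xi_isGreatest G).1
    simp only [Set.mem_ofPred_eq]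
    rw [corona_eval G h1.ne', h2, h0, mul_zero]
  · simp only [Set.mem_ofPred_eq] at hx
    -- `x = -1` may be a root not coming from `G`, but it lies below the claimed maximum.
    rcases le_or_gt (1 + x) 0 with h | h
    · linarith
    · rw [corona_eval G h.ne'] at hx
      rw [subst_le_iff h hxi]
      exact (xi_isGreatest G).2
        ((mul_eq_zero.1 hx).resolve_left (ne_of_gt (pow_pos h _)))

/-! ### The two equivalences -/

theorem pre_iff_corona {V W : Type*} [Fintype V] [Fintype W] [Nonempty V]
    (G : SimpleGraph V) (H : SimpleGraph W) (hc : Fintype.card W = Fintype.card V) :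
    Pre H G ↔ Pre (corona H) (corona G) := by
  have hxi := (xi_neg G).le
  unfold Pre
  rw [xi_corona]
  constructor
  · rintro h x ⟨hx1, hx0⟩
    have hx : 0 < 1 + x := by linarith [(subst_inv hxi).1]
    rw [corona_eval G hx.ne', corona_eval H hx.ne', hc]
    refine mul_le_mul_of_nonneg_left (h _ ⟨(le_subst_iff hx hxi).1 hx1, ?_⟩) (pow_pos hx _).le
    exact div_nonpos_of_nonpos_of_nonneg hx0 hx.le
  · rintro h y ⟨hy1, hy0⟩
    obtain ⟨h1, h2⟩ := subst_inv hy0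
    have := h (y / (1 - y)) ⟨(le_subst_iff h1 hxi).2 (by rwa [h2]),
      div_nonpos_of_nonpos_of_nonneg hy0 (by linarith)⟩
    rw [corona_eval G h1.ne', corona_eval H h1.ne', hc, h2] at this
    exact le_of_mul_le_mul_left this (pow_pos h1 _)

theorem indepPoly_eq_iff_corona {V W : Type*} [Fintype V] [Fintype W]
    (G : SimpleGraph V) (H : SimpleGraph W) (hc : Fintype.card W = Fintype.card V) :
    indepPoly H = indepPoly G ↔ indepPoly (corona H) = indepPoly (corona G) := by
  constructor
  · intro h
    refine Polynomial.eq_of_infinite_eval_eq _ _ ((Set.Ioi_infinite (-1 : ℝ)).mono ?_)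
    intro x hx
    have hx' : 0 < 1 + x := by linarith [Set.mem_Ioi.1 hx]
    simp only [Set.mem_ofPred_eq]
    rw [corona_eval G hx'.ne', corona_eval H hx'.ne', hc, h]
  · intro h
    refine Polynomial.eq_of_infinite_eval_eq _ _ ((Set.Iic_infinite (0 : ℝ)).mono ?_)
    intro y hy
    obtain ⟨h1, h2⟩ := subst_inv (Set.mem_Iic.1 hy)
    have := congrArg (Polynomial.eval (y / (1 - y))) h
    rw [corona_eval G h1.ne', corona_eval H h1.ne', hc, h2] at this
    exact mul_left_cancel₀ (ne_of_gt (pow_pos h1 _)) this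

/-- For graphs `G`, `H` of the same order `n ≥ 1`, `H ⪯ G` iff `H* ⪯ G*`,
and `H ≺ G` iff `H* ≺ G*`. -/
theorem stmt4 {V W : Type*} [Fintype V] [Fintype W] (n : ℕ) (hn : 1 ≤ n)
    (G : SimpleGraph V) (H : SimpleGraph W)
    (hV : Fintype.card V = n) (hW : Fintype.card W = n) :
    (Pre H G ↔ Pre (corona H) (corona G)) ∧ (SPre H G ↔ SPre (corona H) (corona G)) := by
  have hc : Fintype.card W = Fintype.card V := hW.trans hV.symm
  have : Nonempty V := Fintype.card_pos_iff.1 (by omega)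
  have h := pre_iff_corona G H hc
  exact ⟨h, and_congr h (not_congr (indepPoly_eq_iff_corona G H hc))⟩
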